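/- Let N : [0,∞) → [0,∞) be a nondecreasing step function with polynomial growth, of the form N(t) = #{i : λ_i < t} for a sequence 0 = λ_0 < λ_1 ≤ λ_2 ≤ ⋯ → ∞, and suppose for constants C > 0, m ≥ 0 that s ∫_0^∞ e^{-st} N(t) dt ~ C·Γ(m/2+1)·s^{-m/2} as s → 0⁺. Then N(t) ~ C·t^{m/2} as t → ∞. -/

import Mathlib

open Filter MeasureTheory

section MomentMethod

variable {X ι : Type*} [MeasurableSpace X] {μ : Measure X}

theorem integrable_comp_mul_of_continuous {φ w : X → ℝ} (hφ : Measurable φ)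
    (hφ01 : ∀ x, φ x ∈ Set.Icc (0 : ℝ) 1) (hw : Integrable w μ) {g : ℝ → ℝ} (hg : Continuous g) :
    Integrable (fun x => g (φ x) * w x) μ := by
  obtain ⟨B, hB⟩ := isCompact_Icc.exists_bound_of_continuousOn (hg.continuousOn (s := Set.Icc 0 1))
  exact hw.bdd_mul (hg.measurable.comp hφ).aestronglyMeasurable
    (Eventually.of_forall fun x => hB _ (hφ01 x))

/-- Convergence of all moments of nonnegative weights, pushed forward to `[0, 1]`, implies
convergence of the integrals of every continuous function. -/
theorem tendsto_integral_comp_mul_of_moments {L : Filter ι} {φ : X → ℝ} (hφ : Measurable φ)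
    (hφ01 : ∀ x, φ x ∈ Set.Icc (0 : ℝ) 1) {w : ι → X → ℝ} {v : X → ℝ}
    (hw : ∀ᶠ i in L, Integrable (w i) μ) (hw0 : ∀ᶠ i in L, 0 ≤ᵐ[μ] w i)
    (hv : Integrable v μ) (hv0 : 0 ≤ᵐ[μ] v)
    (hmom : ∀ k : ℕ, Tendsto (fun i => ∫ x, φ x ^ k * w i x ∂μ) L (nhds (∫ x, φ x ^ k * v x ∂μ)))
    {g : ℝ → ℝ} (hg : Continuous g) :
    Tendsto (fun i => ∫ x, g (φ x) * w i x ∂μ) L (nhds (∫ x, g (φ x) * v x ∂μ)) := by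
  have hpoly : ∀ p : Polynomial ℝ, Tendsto (fun i => ∫ x, p.eval (φ x) * w i x ∂μ) L
      (nhds (∫ x, p.eval (φ x) * v x ∂μ)) := by
    intro p
    induction p using Polynomial.induction_on' with
    | add p q hp hq =>
      have key : ∀ u : X → ℝ, Integrable u μ → ∫ x, (p + q).eval (φ x) * u x ∂μ =
          ∫ x, p.eval (φ x) * u x ∂μ + ∫ x, q.eval (φ x) * u x ∂μ := by
        intro u hu
        rw [← integral_add (integrable_comp_mul_of_continuous hφ hφ01 hu p.continuous)
          (integrable_comp_mul_of_continuous hφ hφ01 hu q.continuous)]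
        simp only [Polynomial.eval_add, add_mul]
      rw [key v hv]
      refine (hp.add hq).congr' ?_
      filter_upwards [hw] with i hi using (key _ hi).symm
    | monomial n a =>
      simp only [Polynomial.eval_monomial, mul_assoc, integral_const_mul]
      exact (hmom n).const_mul a
  have hmass : Tendsto (fun i => ∫ x, w i x ∂μ) L (nhds (∫ x, v x ∂μ)) := by
    simpa using hmom 0
  have happrox : ∀ (p : Polynomial ℝ) (δ : ℝ), (∀ y ∈ Set.Icc (0 : ℝ) 1, |p.eval y - g y| < δ) →
      ∀ u : X → ℝ, Integrable u μ → 0 ≤ᵐ[μ] u →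
      |∫ x, p.eval (φ x) * u x ∂μ - ∫ x, g (φ x) * u x ∂μ| ≤ δ * ∫ x, u x ∂μ := by
    intro p δ hp u hu hu0
    rw [← integral_sub (integrable_comp_mul_of_continuous hφ hφ01 hu p.continuous)
      (integrable_comp_mul_of_continuous hφ hφ01 hu hg), ← integral_const_mul, ← Real.norm_eq_abs]
    refine norm_integral_le_of_norm_le (hu.const_mul δ) ?_
    filter_upwards [hu0] with x hx
    rw [← sub_mul, norm_mul, Real.norm_eq_abs, Real.norm_eq_abs, abs_of_nonneg hx]
    exact mul_le_mul_of_nonneg_right (hp _ (hφ01 x)).le hx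
  rw [Metric.tendsto_nhds]
  intro ε hε
  have hM : 0 ≤ ∫ x, v x ∂μ := integral_nonneg_of_ae hv0
  set M := ∫ x, v x ∂μ with hMdef
  have hδ : 0 < ε / (3 * (M + 1)) := by positivity
  obtain ⟨p, hp⟩ := exists_polynomial_near_of_continuousOn 0 1 g hg.continuousOn _ hδ
  have hδM : ε / (3 * (M + 1)) * (M + 1) = ε / 3 := by field_simp
  have hv' := happrox p _ hp v hv hv0
  filter_upwards [hw, hw0, hmass.eventually_lt_const (lt_add_one M),
    Metric.tendsto_nhds.1 (hpoly p) (ε / 3) (by positivity)] with i hi hi0 him hip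
  have hi' := happrox p _ hp _ hi hi0
  have e1 := mul_lt_mul_of_pos_left him hδ
  have e2 := mul_lt_mul_of_pos_left (lt_add_one M) hδ
  rw [Real.dist_eq, abs_lt] at *
  rw [abs_le] at hv' hi'
  constructor <;> linarith [hv'.1, hv'.2, hi'.1, hi'.2, hip.1, hip.2]

end MomentMethod

section Karamata

/-- A nonnegative continuous function supported on `[exp (-b), exp (-a)]`. -/
noncomputable def expBump (a b x : ℝ) : ℝ :=
  max 0 ((x - Real.exp (-b)) * (Real.exp (-a) - x))

theorem continuous_expBump (a b : ℝ) : Continuous (expBump a b) := by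
  unfold expBump; fun_prop

theorem expBump_nonneg (a b x : ℝ) : 0 ≤ expBump a b x := le_max_left _ _

theorem expBump_exp_neg_eq_zero {a b u : ℝ} (hab : a < b) (hu : u ∉ Set.Icc a b) :
    expBump a b (Real.exp (-u)) = 0 := by
  have hba : Real.exp (-b) < Real.exp (-a) := Real.exp_lt_exp.2 (by linarith)
  apply max_eq_left
  rw [Set.mem_Icc, not_and_or, not_le, not_le] at hu
  rcases hu with hu | hu
  · have : Real.exp (-a) < Real.exp (-u) := Real.exp_lt_exp.2 (by linarith)
    nlinarith
  · have : Real.exp (-u) < Real.exp (-b) := Real.exp_lt_exp.2 (by linarith)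
    nlinarith

theorem expBump_exp_neg_pos {a b u : ℝ} (hu : u ∈ Set.Ioo a b) :
    0 < expBump a b (Real.exp (-u)) := by
  have h1 : Real.exp (-u) < Real.exp (-a) := Real.exp_lt_exp.2 (by linarith [hu.1])
  have h2 : Real.exp (-b) < Real.exp (-u) := Real.exp_lt_exp.2 (by linarith [hu.2])
  exact lt_max_of_lt_right (mul_pos (by linarith) (by linarith))

theorem integrableOn_comp_exp_neg_mul {g w : ℝ → ℝ} (hg : Continuous g)
    (hw : IntegrableOn w (Set.Ioi 0)) :
    IntegrableOn (fun u => g (Real.exp (-u)) * w u) (Set.Ioi 0) := by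
  have h := integrable_comp_mul_of_continuous (φ := fun u : ℝ => min (Real.exp (-u)) 1)
    (by fun_prop) (fun u => ⟨le_min (Real.exp_pos _).le zero_le_one, min_le_right _ _⟩) hw hg
  refine IntegrableOn.congr_fun h (fun u hu => ?_) measurableSet_Ioi
  have : Real.exp (-u) ≤ 1 := Real.exp_le_one_iff.2 (by linarith [Set.mem_Ioi.1 hu])
  simp only [min_eq_left this]

theorem integral_expBump_pos {a b : ℝ} (ha : 0 < a) (hab : a < b) :
    0 < ∫ u in Set.Ioi (0 : ℝ), expBump a b (Real.exp (-u)) * Real.exp (-u) := by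
  have hint : IntegrableOn (fun u => expBump a b (Real.exp (-u)) * Real.exp (-u)) (Set.Ioi 0) :=
    integrableOn_comp_exp_neg_mul (continuous_expBump a b) (integrableOn_exp_neg_Ioi 0)
  rw [integral_pos_iff_support_of_nonneg
    (fun u => mul_nonneg (expBump_nonneg _ _ _) (Real.exp_pos _).le) hint]
  have hsub : Set.Ioo a b ⊆
      Function.support fun u => expBump a b (Real.exp (-u)) * Real.exp (-u) :=
    fun u hu => (mul_pos (expBump_exp_neg_pos hu) (Real.exp_pos _)).ne'
  refine lt_of_lt_of_le ?_ (measure_mono hsub)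
  rw [Measure.restrict_apply measurableSet_Ioo,
    Set.inter_eq_left.2 (Set.Ioo_subset_Ioi_self.trans (Set.Ioi_subset_Ioi ha.le)), Real.volume_Ioo]
  simpa using hab

variable {N : ℝ → ℝ} {α C : ℝ}

theorem integrableOn_exp_neg_mul_comp_mul
    (hint : ∀ s : ℝ, 0 < s → IntegrableOn (fun t => Real.exp (-s * t) * N t) (Set.Ioi 0))
    {T : ℝ} (hT : 0 < T) :
    IntegrableOn (fun u => Real.exp (-u) * (N (T * u) / T ^ α)) (Set.Ioi 0) := by
  have h := (integrableOn_Ioi_comp_mul_left_iff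
    (fun t => Real.exp (-T⁻¹ * t) * N t) 0 hT).2 (by simpa using hint T⁻¹ (inv_pos.2 hT))
  refine IntegrableOn.congr_fun (Integrable.div_const h (T ^ α)) (fun u _ => ?_) measurableSet_Ioi
  have : -T⁻¹ * (T * u) = -u := by field_simp
  simp only [this]
  ring

theorem integrableOn_exp_neg_mul_rpow (hα : 0 ≤ α) :
    IntegrableOn (fun u => Real.exp (-u) * (C * u ^ α)) (Set.Ioi 0) := by
  have h := (Real.GammaIntegral_convergent (s := α + 1) (by linarith)).const_mul C
  refine IntegrableOn.congr_fun h (fun u _ => ?_) measurableSet_Ioi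
  simp only [add_sub_cancel_right]
  ring

theorem tendsto_integral_exp_neg_pow_mul (hα : 0 ≤ α)
    (hlap : Tendsto (fun s : ℝ => s ^ (α + 1) * ∫ t in Set.Ioi (0 : ℝ), Real.exp (-s * t) * N t)
      (nhdsWithin 0 (Set.Ioi 0)) (nhds (C * Real.Gamma (α + 1)))) (k : ℕ) :
    Tendsto (fun T : ℝ => ∫ u in Set.Ioi (0 : ℝ),
        Real.exp (-u) ^ k * (Real.exp (-u) * (N (T * u) / T ^ α))) atTop
      (nhds (∫ u in Set.Ioi (0 : ℝ), Real.exp (-u) ^ k * (Real.exp (-u) * (C * u ^ α)))) := by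
  have hk : (0 : ℝ) < k + 1 := by positivity
  have hpow : ∀ u : ℝ, Real.exp (-u) ^ k * Real.exp (-u) = Real.exp (-((k + 1) * u)) := by
    intro u
    rw [← pow_succ, ← Real.exp_nat_mul]
    push_cast
    ring_nf
  have hlim : ∫ u in Set.Ioi (0 : ℝ), Real.exp (-u) ^ k * (Real.exp (-u) * (C * u ^ α)) =
      ((k : ℝ) + 1) ^ (-(α + 1)) * (C * Real.Gamma (α + 1)) := by
    have h := Real.integral_rpow_mul_exp_neg_mul_Ioi (a := α + 1) (by linarith) hk
    rw [add_sub_cancel_right, one_div, Real.inv_rpow hk.le, ← Real.rpow_neg hk.le] at h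
    calc _ = ∫ u in Set.Ioi (0 : ℝ), C * (u ^ α * Real.exp (-((k + 1) * u))) := by
          refine integral_congr_ae (Eventually.of_forall fun u => ?_)
          simp only [← hpow]
          ring
      _ = _ := by rw [integral_const_mul, h]; ring
  rw [hlim]
  have hs : Tendsto (fun T : ℝ => ((k : ℝ) + 1) * T⁻¹) atTop (nhdsWithin 0 (Set.Ioi 0)) := by
    refine tendsto_nhdsWithin_iff.2 ⟨by simpa using tendsto_inv_atTop_zero.const_mul ((k : ℝ) + 1),
      ?_⟩
    filter_upwards [eventually_gt_atTop 0] with T hT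
    exact mul_pos hk (inv_pos.2 hT)
  refine ((hlap.comp hs).const_mul (((k : ℝ) + 1) ^ (-(α + 1)))).congr' ?_
  filter_upwards [eventually_gt_atTop 0] with T hT
  have hsub := integral_comp_mul_left_Ioi
    (fun t => Real.exp (-(((k : ℝ) + 1) * T⁻¹) * t) * N t) 0 hT
  rw [mul_zero, smul_eq_mul] at hsub
  have hlhs : ∫ u in Set.Ioi (0 : ℝ), Real.exp (-u) ^ k * (Real.exp (-u) * (N (T * u) / T ^ α)) =
      (T ^ α)⁻¹ * ∫ u in Set.Ioi (0 : ℝ),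
        Real.exp (-(((k : ℝ) + 1) * T⁻¹) * (T * u)) * N (T * u) := by
    rw [← integral_const_mul]
    refine integral_congr_ae (Eventually.of_forall fun u => ?_)
    have : -(((k : ℝ) + 1) * T⁻¹) * (T * u) = -((k + 1) * u) := by field_simp
    simp only [this, ← hpow]
    ring
  rw [hlhs, hsub, Function.comp_apply, Real.mul_rpow hk.le (inv_pos.2 hT).le, Real.rpow_neg hk.le,
    Real.inv_rpow hT.le, Real.rpow_add hT, Real.rpow_one]
  have h1 : ((k : ℝ) + 1) ^ (α + 1) ≠ 0 := (Real.rpow_pos_of_pos hk _).ne'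
  have h2 : T ^ α ≠ 0 := (Real.rpow_pos_of_pos hT _).ne'
  field_simp

theorem tendsto_integral_comp_exp_neg_mul (hN0 : ∀ t, 0 ≤ N t) (hα : 0 ≤ α) (hC : 0 ≤ C)
    (hint : ∀ s : ℝ, 0 < s → IntegrableOn (fun t => Real.exp (-s * t) * N t) (Set.Ioi 0))
    (hlap : Tendsto (fun s : ℝ => s ^ (α + 1) * ∫ t in Set.Ioi (0 : ℝ), Real.exp (-s * t) * N t)
      (nhdsWithin 0 (Set.Ioi 0)) (nhds (C * Real.Gamma (α + 1)))) {g : ℝ → ℝ} (hg : Continuous g) :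
    Tendsto (fun T : ℝ => ∫ u in Set.Ioi (0 : ℝ),
        g (Real.exp (-u)) * (Real.exp (-u) * (N (T * u) / T ^ α))) atTop
      (nhds (∫ u in Set.Ioi (0 : ℝ), g (Real.exp (-u)) * (Real.exp (-u) * (C * u ^ α)))) := by
  have hmin : ∀ (h w : ℝ → ℝ), ∫ u in Set.Ioi (0 : ℝ), h (min (Real.exp (-u)) 1) * w u =
      ∫ u in Set.Ioi (0 : ℝ), h (Real.exp (-u)) * w u := by
    intro h w
    refine setIntegral_congr_fun measurableSet_Ioi fun u hu => ?_
    have : Real.exp (-u) ≤ 1 := Real.exp_le_one_iff.2 (by linarith [Set.mem_Ioi.1 hu])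
    simp only [min_eq_left this]
  have key := tendsto_integral_comp_mul_of_moments (μ := volume.restrict (Set.Ioi (0 : ℝ)))
    (L := atTop) (φ := fun u : ℝ => min (Real.exp (-u)) 1)
    (w := fun T u => Real.exp (-u) * (N (T * u) / T ^ α))
    (v := fun u => Real.exp (-u) * (C * u ^ α)) (by fun_prop)
    (fun u => ⟨le_min (Real.exp_pos _).le zero_le_one, min_le_right _ _⟩)
    ((eventually_gt_atTop 0).mono fun T hT => integrableOn_exp_neg_mul_comp_mul hint hT)
    ((eventually_gt_atTop 0).mono fun T hT => Eventually.of_forall fun u =>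
      mul_nonneg (Real.exp_pos _).le (div_nonneg (hN0 _) (Real.rpow_nonneg hT.le _)))
    (integrableOn_exp_neg_mul_rpow hα)
    ((ae_restrict_mem measurableSet_Ioi).mono fun u hu =>
      mul_nonneg (Real.exp_pos _).le (mul_nonneg hC (Real.rpow_nonneg (Set.mem_Ioi.1 hu).le _)))
    (fun k => by
      simp only [hmin (fun y => y ^ k)]
      exact tendsto_integral_exp_neg_pow_mul hα hlap k) hg
  simpa only [hmin g] using key

theorem setIntegral_expBump_mul_le {a b : ℝ} (hab : a < b) {f h : ℝ → ℝ}
    (hf : IntegrableOn (fun u => Real.exp (-u) * f u) (Set.Ioi 0))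
    (hh : IntegrableOn (fun u => Real.exp (-u) * h u) (Set.Ioi 0))
    (hfh : ∀ u ∈ Set.Icc a b, f u ≤ h u) :
    ∫ u in Set.Ioi (0 : ℝ), expBump a b (Real.exp (-u)) * (Real.exp (-u) * f u) ≤
      ∫ u in Set.Ioi (0 : ℝ), expBump a b (Real.exp (-u)) * (Real.exp (-u) * h u) := by
  refine setIntegral_mono (integrableOn_comp_exp_neg_mul (continuous_expBump a b) hf)
    (integrableOn_comp_exp_neg_mul (continuous_expBump a b) hh) fun u => ?_
  by_cases hu : u ∈ Set.Icc a b
  · exact mul_le_mul_of_nonneg_left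
      (mul_le_mul_of_nonneg_left (hfh u hu) (Real.exp_pos _).le) (expBump_nonneg _ _ _)
  · simp [expBump_exp_neg_eq_zero hab hu]

theorem setIntegral_expBump_mul_const (a b c : ℝ) :
    ∫ u in Set.Ioi (0 : ℝ), expBump a b (Real.exp (-u)) * (Real.exp (-u) * c) =
      (∫ u in Set.Ioi (0 : ℝ), expBump a b (Real.exp (-u)) * Real.exp (-u)) * c := by
  simp only [← mul_assoc, integral_mul_const]

/-- Karamata's Tauberian theorem for the Laplace transform of a nondecreasing function. -/
theorem tendsto_div_rpow_of_tendsto_laplace (hN : Monotone N) (hN0 : ∀ t, 0 ≤ N t) (hα : 0 ≤ α)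
    (hC : 0 ≤ C)
    (hint : ∀ s : ℝ, 0 < s → IntegrableOn (fun t => Real.exp (-s * t) * N t) (Set.Ioi 0))
    (hlap : Tendsto (fun s : ℝ => s ^ (α + 1) * ∫ t in Set.Ioi (0 : ℝ), Real.exp (-s * t) * N t)
      (nhdsWithin 0 (Set.Ioi 0)) (nhds (C * Real.Gamma (α + 1)))) :
    Tendsto (fun T : ℝ => N T / T ^ α) atTop (nhds C) := by
  have hcont : Tendsto (fun b : ℝ => C * b ^ α) (nhds 1) (nhds C) := by
    have h : ContinuousAt (fun b : ℝ => C * b ^ α) 1 :=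
      continuousAt_const.mul (Real.continuousAt_rpow_const 1 α (Or.inl one_ne_zero))
    simpa [ContinuousAt] using h
  have hconst : ∀ c : ℝ, IntegrableOn (fun u => Real.exp (-u) * c) (Set.Ioi 0) := fun c =>
    Integrable.mul_const (integrableOn_exp_neg_Ioi 0) c
  have hlim := fun a b =>
    tendsto_integral_comp_exp_neg_mul hN0 hα hC hint hlap (continuous_expBump a b)
  refine tendsto_order.2 ⟨fun c hc => ?_, fun c hc => ?_⟩
  · obtain ⟨a, hac, ha0, ha1⟩ := (((hcont.mono_left nhdsWithin_le_nhds).eventually_const_lt hc).and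
      (Ioo_mem_nhdsLT (zero_lt_one (α := ℝ)))).exists
    have hpos := integral_expBump_pos ha0 ha1
    have hlow := setIntegral_expBump_mul_le ha1 (hconst (C * a ^ α))
      (integrableOn_exp_neg_mul_rpow (C := C) hα) fun u hu =>
        mul_le_mul_of_nonneg_left (Real.rpow_le_rpow ha0.le hu.1 hα) hC
    rw [setIntegral_expBump_mul_const] at hlow
    filter_upwards [(hlim a 1).eventually_const_lt
      ((mul_lt_mul_of_pos_left hac hpos).trans_le hlow), eventually_gt_atTop 0] with T hT hT0
    have hup := setIntegral_expBump_mul_le ha1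
      (integrableOn_exp_neg_mul_comp_mul (α := α) hint hT0) (hconst (N T / T ^ α)) fun u hu =>
        div_le_div_of_nonneg_right (hN (mul_le_of_le_one_right hT0.le hu.2))
          (Real.rpow_nonneg hT0.le _)
    rw [setIntegral_expBump_mul_const] at hup
    exact lt_of_mul_lt_mul_left (hT.trans_le hup) hpos.le
  · obtain ⟨b, hbc, hb1⟩ := (((hcont.mono_left nhdsWithin_le_nhds).eventually_lt_const hc).and
      (self_mem_nhdsWithin (s := Set.Ioi (1 : ℝ)))).exists
    have hpos := integral_expBump_pos zero_lt_one hb1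
    have hup := setIntegral_expBump_mul_le hb1 (integrableOn_exp_neg_mul_rpow (C := C) hα)
      (hconst (C * b ^ α)) fun u hu =>
        mul_le_mul_of_nonneg_left (Real.rpow_le_rpow (zero_le_one.trans hu.1) hu.2 hα) hC
    rw [setIntegral_expBump_mul_const] at hup
    filter_upwards [(hlim 1 b).eventually_lt_const
      (hup.trans_lt (mul_lt_mul_of_pos_left hbc hpos)), eventually_gt_atTop 0] with T hT hT0
    have hlow := setIntegral_expBump_mul_le hb1 (hconst (N T / T ^ α))
      (integrableOn_exp_neg_mul_comp_mul (α := α) hint hT0) fun u hu =>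
        div_le_div_of_nonneg_right (hN (le_mul_of_one_le_right hT0.le hu.1))
          (Real.rpow_nonneg hT0.le _)
    rw [setIntegral_expBump_mul_const] at hlow
    exact lt_of_mul_lt_mul_left (hlow.trans_lt hT) hpos.le

theorem integrableOn_exp_neg_mul_of_le (hN : Monotone N) {r s : ℝ} (hrs : r ≤ s)
    (hr : IntegrableOn (fun t => Real.exp (-r * t) * N t) (Set.Ioi 0)) :
    IntegrableOn (fun t => Real.exp (-s * t) * N t) (Set.Ioi 0) := by
  have hmeas : Measurable fun t => Real.exp (-s * t) * N t :=
    (by fun_prop : Measurable fun t => Real.exp (-s * t)).mul hN.measurable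
  refine Integrable.mono hr hmeas.aestronglyMeasurable ?_
  filter_upwards [ae_restrict_mem measurableSet_Ioi] with t ht
  rw [norm_mul, norm_mul, Real.norm_of_nonneg (Real.exp_pos _).le,
    Real.norm_of_nonneg (Real.exp_pos _).le]
  refine mul_le_mul_of_nonneg_right (Real.exp_le_exp.2 ?_) (norm_nonneg _)
  nlinarith [Set.mem_Ioi.1 ht]

end Karamata

/-- Tauberian theorem for eigenvalue counting functions: if
`N(t) = #{i : λ_i < t}` for `0 = λ_0 < λ_1 ≤ λ_2 ≤ ⋯ → ∞`, and
`s ∫_0^∞ e^{-st} N(t) dt ~ C·Γ(m/2+1)·s^{-m/2}` as `s → 0⁺`, then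
`N(t) ~ C·t^{m/2}` as `t → ∞`. -/
theorem tauberian_counting_function (l : ℕ → ℝ) (h0 : l 0 = 0)
    (h1 : 0 < l 1) (hmono : Monotone l)
    (htop : Tendsto l atTop atTop)
    (C : ℝ) (hC : 0 < C) (m : ℕ)
    (N : ℝ → ℝ) (hN : ∀ t, N t = (Nat.card {i : ℕ | l i < t} : ℝ))
    (hlap : Tendsto (fun s : ℝ =>
        (s * ∫ t in Set.Ioi (0 : ℝ), Real.exp (-s * t) * N t) /
          (C * Real.Gamma ((m : ℝ) / 2 + 1) * s ^ (-(m : ℝ) / 2)))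
      (nhdsWithin 0 (Set.Ioi 0)) (nhds 1)) :
    Tendsto (fun t : ℝ => N t / (C * t ^ ((m : ℝ) / 2))) atTop (nhds 1) := by
  have hfin : ∀ t, {i : ℕ | l i < t}.Finite := fun t => by
    have h := htop.eventually_ge_atTop t
    rw [← Nat.cofinite_eq_atTop, eventually_cofinite] at h
    simpa only [not_le] using h
  have hNmono : Monotone N := fun a b hab => by
    rw [hN, hN]
    exact_mod_cast Nat.card_mono (hfin b) fun i (hi : l i < a) => lt_of_lt_of_le hi hab
  have hN0 : ∀ t, 0 ≤ N t := fun t => by rw [hN]; positivity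
  have hα : (0 : ℝ) ≤ (m : ℝ) / 2 := by positivity
  have hΓ : 0 < Real.Gamma ((m : ℝ) / 2 + 1) := Real.Gamma_pos_of_pos (by linarith)
  have hint : ∀ s : ℝ, 0 < s →
      IntegrableOn (fun t => Real.exp (-s * t) * N t) (Set.Ioi 0) := by
    intro s hs
    obtain ⟨r, hr, _, hrs⟩ :=
      ((hlap.eventually_const_lt zero_lt_one).and (Ioo_mem_nhdsGT hs)).exists
    refine integrableOn_exp_neg_mul_of_le hNmono hrs.le ?_
    by_contra hnot
    rw [integral_undef hnot] at hr
    simp at hr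
  have hlap' : Tendsto (fun s : ℝ => s ^ ((m : ℝ) / 2 + 1) *
      ∫ t in Set.Ioi (0 : ℝ), Real.exp (-s * t) * N t)
      (nhdsWithin 0 (Set.Ioi 0)) (nhds (C * Real.Gamma ((m : ℝ) / 2 + 1))) := by
    have h := hlap.const_mul (C * Real.Gamma ((m : ℝ) / 2 + 1))
    rw [mul_one] at h
    refine h.congr' ?_
    filter_upwards [self_mem_nhdsWithin] with s hs
    have hs : 0 < s := hs
    have hpow : s ^ ((m : ℝ) / 2) ≠ 0 := (Real.rpow_pos_of_pos hs _).ne'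
    rw [neg_div, Real.rpow_neg hs.le, Real.rpow_add hs, Real.rpow_one]
    field_simp
  have hmain := (tendsto_div_rpow_of_tendsto_laplace hNmono hN0 hα hC.le hint hlap').div_const C
  rw [div_self hC.ne'] at hmain
  refine hmain.congr fun t => ?_
  rw [div_div, mul_comm]
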